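/- Let H be a 2-vertex-connected undirected graph with a DFS tree T rooted at r. Let v be a vertex and let u be a proper ancestor of v with u ≠ r and M(u) = v. Then {v,(u,p(u))} is a vertex-edge cut-pair of H if and only if there is no child c of v in T such that u is both an ancestor of high_p(c) and a proper descendant of low(c). -/

import Mathlib

/-- A DFS tree of the graph `H`, rooted at `r`, given by a parent function:
it is a spanning tree (every vertex reaches the root by iterating the parent
function, and each non-root vertex is adjacent to its parent), and every edge
of `H` joins a vertex to one of its ancestors. -/
structure DFSTree {V : Type*} (H : SimpleGraph V) (r : V) where
  par : V → V
  par_root : par r = r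
  reaches_root : ∀ v : V, ∃ n : ℕ, par^[n] v = r
  par_adj : ∀ v : V, v ≠ r → H.Adj v (par v)
  edge_anc : ∀ x y : V, H.Adj x y → (∃ n : ℕ, par^[n] x = y) ∨ (∃ n : ℕ, par^[n] y = x)

namespace DFSTree

variable {V : Type*} {H : SimpleGraph V} {r : V} (T : DFSTree H r)

/-- `a` is an ancestor of `b` (every vertex is an ancestor of itself). -/
def Anc (a b : V) : Prop := ∃ n : ℕ, T.par^[n] b = a

/-- `a` is a proper ancestor of `b`. -/
def PAnc (a b : V) : Prop := T.Anc a b ∧ a ≠ b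

/-- `(x,y)` is a back-edge: an edge of `H` from `x` to an ancestor `y` of `x`
which is not the tree edge from `x` to its parent. -/
def BackEdge (x y : V) : Prop := H.Adj x y ∧ T.Anc y x ∧ T.par x ≠ y

/-- The set of descendants of `v` joined by a back-edge to a proper ancestor of `v`. -/
def MSet (v : V) : Set V := {x | T.Anc v x ∧ ∃ y, T.PAnc y v ∧ T.BackEdge x y}

/-- `m = M(v)`: `m` is the nearest common ancestor of all descendants of `v`
joined by a back-edge to a proper ancestor of `v`. -/
def IsM (v m : V) : Prop :=
  (∀ x ∈ T.MSet v, T.Anc m x) ∧ ∀ m' : V, (∀ x ∈ T.MSet v, T.Anc m' x) → T.Anc m' m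

/-- The set of descendants of `v` joined by a back-edge to a proper ancestor of `p(v)`. -/
def MpSet (v : V) : Set V := {x | T.Anc v x ∧ ∃ y, T.PAnc y (T.par v) ∧ T.BackEdge x y}

/-- `m = M_p(v)`: `m` is the nearest common ancestor of all descendants of `v`
joined by a back-edge to a proper ancestor of `p(v)`. -/
def IsMp (v m : V) : Prop :=
  (∀ x ∈ T.MpSet v, T.Anc m x) ∧ ∀ m' : V, (∀ x ∈ T.MpSet v, T.Anc m' x) → T.Anc m' m

/-- `h = high(v)`: `h` is the deepest proper ancestor of `v` joined by a
back-edge to a descendant of `v`. -/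
def IsHigh (v h : V) : Prop :=
  T.PAnc h v ∧ (∃ x, T.Anc v x ∧ T.BackEdge x h) ∧
    ∀ h' : V, T.PAnc h' v → (∃ x, T.Anc v x ∧ T.BackEdge x h') → T.Anc h' h

/-- `h = high_p(v)`: `h` is the deepest proper ancestor of `p(v)` joined by a
back-edge to a descendant of `v`. -/
def IsHighP (v h : V) : Prop :=
  T.PAnc h (T.par v) ∧ (∃ x, T.Anc v x ∧ T.BackEdge x h) ∧
    ∀ h' : V, T.PAnc h' (T.par v) → (∃ x, T.Anc v x ∧ T.BackEdge x h') → T.Anc h' h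

/-- `l = low(v)`: `l` is the proper ancestor of `v` nearest to the root joined
by a back-edge to a descendant of `v`. -/
def IsLow (v l : V) : Prop :=
  T.PAnc l v ∧ (∃ x, T.Anc v x ∧ T.BackEdge x l) ∧
    ∀ l' : V, T.PAnc l' v → (∃ x, T.Anc v x ∧ T.BackEdge x l') → T.Anc l l'

end DFSTree

/-- `{v, e}` is a vertex-edge cut-pair of `H`: `e` is an edge of `H` and deleting
both `v` (with its incident edges) and `e` disconnects `H`. -/
def VECutPair {V : Type*} (H : SimpleGraph V) (v : V) (e : Sym2 V) : Prop :=
  e ∈ H.edgeSet ∧ ¬ ((H.deleteEdges {e}).induce {u | u ≠ v}).Connected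

/-- `{e, e'}` is a cut-pair of `H`: `e` and `e'` are distinct edges of `H` whose
deletion disconnects `H`. -/
def ECutPair {V : Type*} (H : SimpleGraph V) (e e' : Sym2 V) : Prop :=
  e ∈ H.edgeSet ∧ e' ∈ H.edgeSet ∧ e ≠ e' ∧ ¬ (H.deleteEdges {e, e'}).Connected

/-- An undirected graph is 2-edge-connected if it is connected and has no bridge. -/
def TwoEdgeConnected {W : Type*} (G : SimpleGraph W) : Prop :=
  G.Connected ∧ ∀ e ∈ G.edgeSet, ¬ G.IsBridge e

/-- An undirected graph is 2-vertex-connected if it has at least three vertices,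
is connected, and deleting any single vertex leaves it connected. -/
def TwoVertexConnected {W : Type*} (G : SimpleGraph W) : Prop :=
  3 ≤ Nat.card W ∧ G.Connected ∧ ∀ v : W, (G.induce {u | u ≠ v}).Connected


namespace DFSTree

variable {V : Type*} {H : SimpleGraph V} {r : V} (T : DFSTree H r)

theorem anc_refl (a : V) : T.Anc a a := ⟨0, rfl⟩

theorem anc_trans {a b c : V} (h1 : T.Anc a b) (h2 : T.Anc b c) : T.Anc a c := by
  obtain ⟨n, rfl⟩ := h1
  obtain ⟨m, rfl⟩ := h2
  exact ⟨n + m, by rw [Function.iterate_add_apply]⟩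

theorem anc_par (a : V) : T.Anc (T.par a) a := ⟨1, rfl⟩

theorem anc_cases {a b : V} (h : T.Anc a b) : a = b ∨ T.Anc a (T.par b) := by
  obtain ⟨n, rfl⟩ := h
  cases n with
  | zero => left; rfl
  | succ n => right; exact ⟨n, by rw [Function.iterate_succ_apply]⟩

theorem root_anc (a : V) : T.Anc r a := T.reaches_root a

theorem anc_root {a : V} (h : T.Anc a r) : a = r := by
  obtain ⟨n, rfl⟩ := h
  induction n with
  | zero => rfl
  | succ n ih => rw [Function.iterate_succ_apply, T.par_root, ih]

theorem anc_total {a b x : V} (h1 : T.Anc a x) (h2 : T.Anc b x) : T.Anc a b ∨ T.Anc b a := by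
  obtain ⟨n, rfl⟩ := h1
  obtain ⟨m, rfl⟩ := h2
  rcases le_total n m with h | h
  · right
    exact ⟨m - n, by rw [← Function.iterate_add_apply]; congr 1; omega⟩
  · left
    exact ⟨n - m, by rw [← Function.iterate_add_apply]; congr 1; omega⟩

open Classical in
noncomputable def depth (x : V) : ℕ := Nat.find (T.reaches_root x)

theorem depth_par {x : V} (hx : x ≠ r) : T.depth (T.par x) < T.depth x := by
  classical
  have h : T.par^[T.depth x] x = r := Nat.find_spec (T.reaches_root x)
  cases hd : T.depth x with
  | zero => rw [hd] at h; exact absurd h hx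
  | succ n =>
    rw [hd, Function.iterate_succ_apply] at h
    exact Nat.lt_succ_of_le (Nat.find_min' (T.reaches_root (T.par x)) h)

theorem depth_anc {a b : V} (h : T.Anc a b) : a = b ∨ T.depth a < T.depth b := by
  obtain ⟨n, rfl⟩ := h
  induction n generalizing b with
  | zero => left; rfl
  | succ n ih =>
    rw [Function.iterate_succ_apply]
    by_cases hb : b = r
    · subst hb
      rw [T.par_root]; exact ih
    · right
      have := T.depth_par hb
      rcases ih (b := T.par b) with h | h
      · rw [h]; exact this
      · omega

theorem anc_antisymm {a b : V} (h1 : T.Anc a b) (h2 : T.Anc b a) : a = b := by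
  rcases T.depth_anc h1 with h | h
  · exact h
  · rcases T.depth_anc h2 with h' | h'
    · exact h'.symm
    · omega

theorem not_anc_par {a : V} (ha : a ≠ r) : ¬ T.Anc a (T.par a) := by
  intro h
  have := T.depth_par ha
  rcases T.depth_anc h with h | h
  · rw [← h] at this; omega
  · omega

/-- child of `v` above a proper descendant -/
theorem exists_child {v x : V} (h : T.Anc v x) (hne : x ≠ v) :
    ∃ c, T.par c = v ∧ c ≠ r ∧ T.Anc c x := by
  obtain ⟨n, hn⟩ := h
  induction n generalizing x with
  | zero => exact absurd hn hne
  | succ n ih =>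
    rw [Function.iterate_succ_apply] at hn
    by_cases hp : T.par x = v
    · refine ⟨x, hp, ?_, T.anc_refl x⟩
      rintro rfl
      exact hne (by rw [← hp, T.par_root])
    · obtain ⟨c, h1, h2, h3⟩ := ih hp hn
      exact ⟨c, h1, h2, T.anc_trans h3 (T.anc_par x)⟩

theorem exists_deepest {c : V} (P : V → Prop) (hP : ∀ x, P x → T.Anc x c) (hne : ∃ x, P x) :
    ∃ x, P x ∧ ∀ y, P y → T.Anc y x := by
  classical
  have hex : ∃ n, P (T.par^[n] c) := by
    obtain ⟨x, hx⟩ := hne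
    obtain ⟨n, hn⟩ := hP x hx
    exact ⟨n, hn ▸ hx⟩
  refine ⟨_, Nat.find_spec hex, fun y hy => ?_⟩
  obtain ⟨m, rfl⟩ := hP y hy
  have hle : Nat.find hex ≤ m := Nat.find_min' hex hy
  exact ⟨m - Nat.find hex, by rw [← Function.iterate_add_apply]; congr 1; omega⟩

theorem exists_shallowest {c : V} (P : V → Prop) (hP : ∀ x, P x → T.Anc x c) (hne : ∃ x, P x) :
    ∃ x, P x ∧ ∀ y, P y → T.Anc x y := by
  obtain ⟨x, hx, hmin⟩ := (measure T.depth).wf.has_min {x | P x} hne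
  refine ⟨x, hx, fun y hy => ?_⟩
  rcases T.anc_total (hP x hx) (hP y hy) with h | h
  · exact h
  · rcases T.depth_anc h with h' | h'
    · exact h' ▸ T.anc_refl y
    · exact absurd h' (hmin y hy)

theorem backEdge_of {c v x y : V} (hc : T.par c = v) (hcr : c ≠ r) (hx : T.Anc c x)
    (hadj : H.Adj x y) (hy : T.PAnc y v) : T.BackEdge x y := by
  have hvc : T.Anc v c := hc ▸ T.anc_par c
  refine ⟨hadj, T.anc_trans hy.1 (T.anc_trans hvc hx), ?_⟩
  rintro rfl
  rcases T.anc_cases hx with rfl | h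
  · exact hy.2 hc
  · exact T.not_anc_par hcr (hc ▸ T.anc_trans h hy.1)

/-- an edge leaving the subtree of `c` -/
theorem leave {c v x y : V} (hc : T.par c = v) (hx : T.Anc c x) (hy : ¬ T.Anc c y)
    (hadj : H.Adj x y) (hyv : y ≠ v) : T.PAnc y v := by
  rcases T.edge_anc x y hadj with h | h
  · have h : T.Anc y x := h
    rcases T.anc_total hx h with h' | h'
    · exact absurd h' hy
    · rcases T.anc_cases h' with h'' | h''
      · exact absurd (h'' ▸ T.anc_refl c) hy
      · exact ⟨hc ▸ h'', hyv⟩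
  · have h : T.Anc x y := h
    exact absurd (T.anc_trans hx h) hy

theorem crossing {W : Type*} {G : SimpleGraph W} (hG : G.Connected) (S : Set W) {a b : W}
    (ha : a ∈ S) (hb : b ∉ S) : ∃ x y, G.Adj x y ∧ x ∈ S ∧ y ∉ S := by
  obtain ⟨w⟩ := hG.preconnected a b
  obtain ⟨d, _, h1, h2⟩ := w.exists_boundary_dart S ha hb
  exact ⟨d.fst, d.snd, d.adj, h1, h2⟩

/-- Reachability in the graph after deletions, on the original vertex type. -/
def RR (v : V) (e : Sym2 V) (x y : V) : Prop :=
  ∃ (hx : x ≠ v) (hy : y ≠ v),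
    ((H.deleteEdges {e}).induce {u | u ≠ v}).Reachable ⟨x, hx⟩ ⟨y, hy⟩

theorem RR.symm {v : V} {e : Sym2 V} {x y : V} (h : RR (H := H) v e x y) :
    RR (H := H) v e y x := by
  obtain ⟨hx, hy, h⟩ := h
  exact ⟨hy, hx, h.symm⟩

theorem RR.trans {v : V} {e : Sym2 V} {x y z : V} (h : RR (H := H) v e x y)
    (h' : RR (H := H) v e y z) : RR (H := H) v e x z := by
  obtain ⟨hx, hy, h⟩ := h
  obtain ⟨hy', hz, h'⟩ := h'
  exact ⟨hx, hz, h.trans h'⟩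

theorem RR.of_adj {v : V} {e : Sym2 V} {x y : V} (hx : x ≠ v) (hy : y ≠ v) (h : H.Adj x y)
    (he : s(x, y) ≠ e) : RR (H := H) v e x y := by
  refine ⟨hx, hy, SimpleGraph.Adj.reachable ?_⟩
  simp only [SimpleGraph.comap_adj, SimpleGraph.deleteEdges_adj, Function.Embedding.subtype_apply,
    Set.mem_singleton_iff]
  exact ⟨h, he⟩

theorem RR.of_anc {v u a x : V} (h : T.Anc a x) (h1 : ¬ (T.Anc a v ∧ T.Anc v x))
    (h2 : ¬ (T.Anc a (T.par u) ∧ T.Anc u x)) : RR (H := H) v s(u, T.par u) x a := by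
  obtain ⟨n, hn⟩ := h
  induction n generalizing x with
  | zero =>
    have hxa : x = a := hn
    subst hxa
    have hxv : x ≠ v := by
      rintro rfl
      exact h1 ⟨T.anc_refl _, T.anc_refl _⟩
    exact ⟨hxv, hxv, SimpleGraph.Reachable.refl _⟩
  | succ n ih =>
    have hax : T.Anc a x := ⟨_, hn⟩
    rw [Function.iterate_succ_apply] at hn
    have hap : T.Anc a (T.par x) := ⟨_, hn⟩
    have hpx := T.anc_par x
    have key := ih (x := T.par x) (fun h => h1 ⟨h.1, T.anc_trans h.2 hpx⟩)
      (fun h => h2 ⟨h.1, T.anc_trans h.2 hpx⟩) hn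
    by_cases hxr : x = r
    · subst hxr
      rwa [T.par_root] at key
    refine RR.trans (RR.of_adj ?_ ?_ (T.par_adj x hxr) ?_) key
    · rintro rfl
      exact h1 ⟨hax, T.anc_refl _⟩
    · intro h
      exact h1 ⟨h ▸ hap, h ▸ hpx⟩
    · intro h
      rcases Sym2.eq_iff.1 h with ⟨h3, h4⟩ | ⟨h3, h4⟩
      · subst h3
        exact h2 ⟨hap, T.anc_refl _⟩
      · have h5 : T.Anc x u := h3 ▸ T.anc_par u
        have h6 : T.Anc u x := h4 ▸ hpx
        have h7 := T.anc_antisymm h5 h6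
        subst h7
        exact T.not_anc_par hxr (h4.symm ▸ T.anc_refl _)

end DFSTree

open DFSTree in
theorem stmt_11 {V : Type*} [Fintype V] (H : SimpleGraph V) (r : V)
    (T : DFSTree H r) (hH : TwoVertexConnected H) (v u : V) (hu : u ≠ r)
    (huv : T.PAnc u v) (hM : T.IsM u v) :
    VECutPair H v s(u, T.par u) ↔
      ¬ ∃ (c hp lo : V), T.par c = v ∧ c ≠ r ∧ T.IsHighP c hp ∧ T.IsLow c lo ∧
        T.Anc u hp ∧ T.PAnc lo u := by
  have hvu : ¬ T.Anc v u := fun h => huv.2 (T.anc_antisymm huv.1 h)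
  have hvr : v ≠ r := by
    rintro rfl
    exact hu (T.anc_root huv.1)
  -- edges out of child subtrees avoid e
  have hedge : ∀ c x y, T.par c = v → c ≠ r → T.Anc c x → s(x, y) ≠ s(u, T.par u) := by
    intro c x y hc hcr hx h
    have hvx : T.Anc v x := T.anc_trans (hc ▸ T.anc_par c) hx
    rcases Sym2.eq_iff.1 h with ⟨h3, _⟩ | ⟨h3, _⟩
    · exact hvu (h3 ▸ hvx)
    · exact hvu (T.anc_trans (h3 ▸ hvx) (T.anc_par u))
  have hcne : ∀ c x, T.par c = v → c ≠ r → T.Anc c x → x ≠ v := by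
    rintro c x hc hcr hx rfl
    exact T.not_anc_par hcr (hc.symm ▸ hx)
  constructor
  · rintro ⟨-, hnc⟩ ⟨c, hp, lo, hc, hcr, hhp, hlo, huhp, hlou⟩
    apply hnc
    have hcv : ¬ T.Anc c v := fun h => hcne c v hc hcr h rfl
    have hsub : ∀ c x, T.par c = v → c ≠ r → T.Anc c x →
        RR (H := H) v s(u, T.par u) x c := by
      intro c x hc hcr hx
      refine RR.of_anc T hx (fun h => hcne c v hc hcr h.1 rfl) (fun h => ?_)
      exact hcne c v hc hcr (T.anc_trans h.1 (T.anc_trans (T.anc_par u) huv.1)) rfl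
    have hB : ∀ x, T.Anc u x → ¬ T.Anc v x → RR (H := H) v s(u, T.par u) x u := by
      intro x h1 h2
      exact RR.of_anc T h1 (fun h => h2 h.2) (fun h => T.not_anc_par hu h.1)
    have hcu : RR (H := H) v s(u, T.par u) c u := by
      obtain ⟨h1, ⟨x, hx, hb⟩, -⟩ := hhp
      rw [hc] at h1
      refine (hsub c x hc hcr hx).symm.trans (RR.trans (RR.of_adj (hcne c x hc hcr hx) h1.2 hb.1
        (hedge c x hp hc hcr hx)) (hB hp huhp ?_))
      exact fun h => h1.2 (T.anc_antisymm h1.1 h)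
    have hA0 : ∀ x, ¬ T.Anc u x → RR (H := H) v s(u, T.par u) x r := by
      intro x hx
      exact RR.of_anc T (T.root_anc x) (fun h => hx (T.anc_trans huv.1 h.2)) (fun h => hx h.2)
    have hru : RR (H := H) v s(u, T.par u) r u := by
      obtain ⟨h1, ⟨x, hx, hb⟩, -⟩ := hlo
      have hnu : ¬ T.Anc u lo := fun h => hlou.2 (T.anc_antisymm hlou.1 h)
      refine (hA0 lo hnu).symm.trans (RR.trans (RR.symm (RR.of_adj (hcne c x hc hcr hx) ?_ hb.1
        (hedge c x lo hc hcr hx))) ((hsub c x hc hcr hx).trans hcu))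
      rintro rfl
      exact hnu huv.1
    have hAB : ∀ x, ¬ T.Anc v x → RR (H := H) v s(u, T.par u) x u := by
      intro x hx
      by_cases h : T.Anc u x
      · exact hB x h hx
      · exact (hA0 x h).trans hru
    have hall : ∀ x, x ≠ v → RR (H := H) v s(u, T.par u) x u := by
      intro x hx
      by_cases h : T.Anc v x
      · obtain ⟨d, hd, hdr, hdx⟩ := T.exists_child h hx
        obtain ⟨⟨a, ha⟩, ⟨b, hb⟩, hab, haS, hbS⟩ := crossing (hH.2.2 v)
          {z | T.Anc d z.1} (a := ⟨x, hx⟩) (b := ⟨u, huv.2⟩) hdx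
          (fun h => hvu (T.anc_trans (hd ▸ T.anc_par d) h))
        have hab : H.Adj a b := hab
        have haS : T.Anc d a := haS
        have hbS : ¬ T.Anc d b := hbS
        have hb' := T.leave hd haS hbS hab hb
        refine (hsub d x hd hdr hdx).trans ((hsub d a hd hdr haS).symm.trans
          (RR.trans (RR.of_adj ha hb hab (hedge d a b hd hdr haS)) (hAB b ?_)))
        exact fun h => hb (T.anc_antisymm hb'.1 h)
      · exact hAB x h
    haveI : Nonempty {w | w ≠ v} := ⟨⟨u, huv.2⟩⟩
    refine SimpleGraph.Connected.mk ?_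
    rintro ⟨x, hx⟩ ⟨y, hy⟩
    obtain ⟨_, _, h⟩ := (hall x hx).trans (hall y hy).symm
    exact h
  · intro hno
    refine ⟨T.par_adj u hu, fun hconn => hno ?_⟩
    obtain ⟨⟨x, hx⟩, ⟨y, hy⟩, hxy, hxS, hyS⟩ := crossing hconn
      {z | (T.Anc u z.1 ∧ ¬ T.Anc v z.1) ∨ ∃ c, T.par c = v ∧ c ≠ r ∧ T.Anc c z.1 ∧
        ∃ x' y', T.Anc c x' ∧ H.Adj x' y' ∧ T.Anc u y' ∧ T.PAnc y' v}
      (a := ⟨u, huv.2⟩) (b := ⟨r, hvr.symm⟩) (Or.inl ⟨T.anc_refl u, hvu⟩) (by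
        rintro (⟨h, -⟩ | ⟨c, -, hcr, h, -⟩)
        · exact hu (T.anc_root h)
        · exact hcr (T.anc_root h))
    simp only [SimpleGraph.comap_adj, SimpleGraph.deleteEdges_adj,
      Function.Embedding.subtype_apply, Set.mem_singleton_iff] at hxy
    simp only [Set.mem_setOf_eq, not_or] at hxS hyS
    obtain ⟨hadj, hne⟩ := hxy
    obtain ⟨hy1, hy2⟩ := hyS
    rcases hxS with ⟨hux, hvx⟩ | ⟨c, hc, hcr, hcx, x', y', hx', hadj', huy', hyv'⟩
    · exfalso
      rcases T.edge_anc x y hadj with h | h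
      · have h : T.Anc y x := h
        have hvy : ¬ T.Anc v y := fun h' => hvx (T.anc_trans h' h)
        have huy : ¬ T.Anc u y := fun h' => hy1 ⟨h', hvy⟩
        have hyu : T.PAnc y u := by
          rcases T.anc_total hux h with h' | h'
          · exact absurd h' huy
          · exact ⟨h', fun h'' => huy (h'' ▸ T.anc_refl _)⟩
        refine hvx (hM.1 x ⟨hux, y, hyu, hadj, h, ?_⟩)
        rintro rfl
        rcases T.anc_cases hux with rfl | h'
        · exact hne rfl
        · exact huy h'
      · have h : T.Anc x y := h
        have huy := T.anc_trans hux h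
        have hvy : T.Anc v y := by
          by_contra h'
          exact hy1 ⟨huy, h'⟩
        obtain ⟨c, hc, hcr, hcy⟩ := T.exists_child hvy hy
        refine hy2 ⟨c, hc, hcr, hcy, y, x, hcy, hadj.symm, hux, ?_, hx⟩
        rcases T.anc_total hvy h with h' | h'
        · exact absurd h' hvx
        · exact h'
    · have hcy : ¬ T.Anc c y := fun h =>
        hy2 ⟨c, hc, hcr, h, x', y', hx', hadj', huy', hyv'⟩
      have hyv := T.leave hc hcx hcy hadj hy
      have hvy : ¬ T.Anc v y := fun h => hy (T.anc_antisymm hyv.1 h)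
      have huy : ¬ T.Anc u y := fun h => hy1 ⟨h, hvy⟩
      have hyu : T.PAnc y u := by
        rcases T.anc_total huv.1 hyv.1 with h' | h'
        · exact absurd h' huy
        · exact ⟨h', fun h'' => huy (h'' ▸ T.anc_refl _)⟩
      have hvc : T.Anc v c := hc ▸ T.anc_par c
      obtain ⟨hp, ⟨hp1, hp2⟩, hp3⟩ := T.exists_deepest (c := v)
        (fun h => T.PAnc h v ∧ ∃ x, T.Anc c x ∧ T.BackEdge x h) (fun _ h => h.1.1)
        ⟨y', hyv', x', hx', T.backEdge_of hc hcr hx' hadj' hyv'⟩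
      have hyc : T.PAnc y c := ⟨T.anc_trans hyv.1 hvc, fun h => hcy (h ▸ T.anc_refl _)⟩
      have hbe := T.backEdge_of hc hcr hcx hadj hyv
      obtain ⟨lo, ⟨lo1, lo2⟩, lo3⟩ := T.exists_shallowest (c := c)
        (fun h => T.PAnc h c ∧ ∃ x, T.Anc c x ∧ T.BackEdge x h) (fun _ h => h.1.1)
        ⟨y, hyc, x, hcx, hbe⟩
      have hloy := lo3 y ⟨hyc, x, hcx, hbe⟩
      refine ⟨c, hp, lo, hc, hcr, ⟨hc.symm ▸ hp1, hp2, fun h' h1 h2 => hp3 h' ⟨hc ▸ h1, h2⟩⟩,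
        ⟨lo1, lo2, fun l' h1 h2 => lo3 l' ⟨h1, h2⟩⟩, ?_, T.anc_trans hloy hyu.1, ?_⟩
      · exact T.anc_trans huy' (hp3 y' ⟨hyv', x', hx', T.backEdge_of hc hcr hx' hadj' hyv'⟩)
      · rintro rfl
        exact huy hloy
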